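/- Let p ∈ (0, 1) and θ ∈ [0, ∞) be real numbers. Suppose f : 𝒜 → 𝒜 satisfies ‖2 μ f((a+b)/2) + 2 μ f((a−b)/2) − 2 f(μ a) + f(c c* c) − f(c) c* c − c (f(c))* c − c c* f(c)‖ ≤ θ(‖a‖^p + ‖b‖^p + ‖c‖^p) for all μ ∈ 𝕋 and all a, b, c ∈ 𝒜. Then there exists a unique J*-derivation D : 𝒜 → 𝒜 such that ‖f(a) − D(a)‖ ≤ (2^p θ/(2 − 2^p)) ‖a‖^p for all a ∈ 𝒜. -/

import Mathlib

open ContinuousLinearMap Filter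

variable {H K : Type*} [NormedAddCommGroup H] [InnerProductSpace ℂ H] [CompleteSpace H]
  [NormedAddCommGroup K] [InnerProductSpace ℂ K] [CompleteSpace K]

/-- `𝒜` is closed under the `J*`-triple product `x ↦ x x* x`. -/
def JStarClosed (𝒜 : Submodule ℂ (H →L[ℂ] K)) : Prop :=
  ∀ x : H →L[ℂ] K, x ∈ 𝒜 → (x ∘L adjoint x) ∘L x ∈ 𝒜

/-- The triple product `c c* c` as an element of `𝒜`. -/
noncomputable def cube (𝒜 : Submodule ℂ (H →L[ℂ] K)) (hA : JStarClosed 𝒜) (c : 𝒜) : 𝒜 :=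
  ⟨((c : H →L[ℂ] K) ∘L adjoint (c : H →L[ℂ] K)) ∘L (c : H →L[ℂ] K), hA c c.2⟩

/-- `D : 𝒜 → 𝒜` is a `J*`-derivation: it is `ℂ`-linear and satisfies
`D(c c* c) = D(c) c* c + c (D(c))* c + c c* D(c)`. -/
noncomputable def IsJStarDerivation (𝒜 : Submodule ℂ (H →L[ℂ] K)) (hA : JStarClosed 𝒜)
    (D : 𝒜 → 𝒜) : Prop :=
  (∀ a b : 𝒜, D (a + b) = D a + D b) ∧
  (∀ (z : ℂ) (a : 𝒜), D (z • a) = z • D a) ∧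
  (∀ c : 𝒜, (D (cube 𝒜 hA c) : H →L[ℂ] K) =
      ((D c : H →L[ℂ] K) ∘L adjoint (c : H →L[ℂ] K)) ∘L (c : H →L[ℂ] K) +
      ((c : H →L[ℂ] K) ∘L adjoint (D c : H →L[ℂ] K)) ∘L (c : H →L[ℂ] K) +
      ((c : H →L[ℂ] K) ∘L adjoint (c : H →L[ℂ] K)) ∘L (D c : H →L[ℂ] K))

/-- The defect of the generalized Jensen functional equation combined with the
`J*`-derivation identity, for a map `f : 𝒜 → 𝒜`, parameter `r` and scalar `μ`. -/
noncomputable def jensenDefect (𝒜 : Submodule ℂ (H →L[ℂ] K)) (hA : JStarClosed 𝒜)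
    (r : ℝ) (f : 𝒜 → 𝒜) (μ : ℂ) (a b c : 𝒜) : H →L[ℂ] K :=
  ((r : ℂ) * μ) • (f ((r : ℂ)⁻¹ • (a + b)) : H →L[ℂ] K) +
  ((r : ℂ) * μ) • (f ((r : ℂ)⁻¹ • (a - b)) : H →L[ℂ] K) -
  (2 : ℂ) • (f (μ • a) : H →L[ℂ] K) +
  (f (cube 𝒜 hA c) : H →L[ℂ] K) -
  ((f c : H →L[ℂ] K) ∘L adjoint (c : H →L[ℂ] K)) ∘L (c : H →L[ℂ] K) -
  ((c : H →L[ℂ] K) ∘L adjoint (f c : H →L[ℂ] K)) ∘L (c : H →L[ℂ] K) -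
  ((c : H →L[ℂ] K) ∘L adjoint (c : H →L[ℂ] K)) ∘L (f c : H →L[ℂ] K)

lemma hur_unit_sum (z : ℂ) (hz : ‖z‖ ≤ 2) :
    ∃ u v : ℂ, ‖u‖ = 1 ∧ ‖v‖ = 1 ∧ z = u + v := by
  have h0 := norm_nonneg z
  set t := Real.arccos (‖z‖ / 2) with ht
  have hc : Real.cos t = ‖z‖ / 2 := Real.cos_arccos (by linarith) (by linarith)
  refine ⟨Complex.exp ((z.arg + t : ℝ) * Complex.I), Complex.exp ((z.arg - t : ℝ) * Complex.I),
    Complex.norm_exp_ofReal_mul_I _, Complex.norm_exp_ofReal_mul_I _, ?_⟩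
  have h1 : (2 : ℂ) * Complex.cos t = ‖z‖ := by
    rw [← Complex.ofReal_cos, hc]; push_cast; ring
  rw [Complex.two_cos] at h1
  conv_lhs => rw [← Complex.norm_mul_exp_arg_mul_I z, ← h1]
  rw [add_mul, ← Complex.exp_add, ← Complex.exp_add]
  congr 2 <;> push_cast <;> ring

lemma hur_homog {E : Type*} [AddCommGroup E] [Module ℂ E] (D : E → E)
    (hadd : ∀ a b, D (a + b) = D a + D b)
    (hu : ∀ μ : ℂ, ‖μ‖ = 1 → ∀ a, D (μ • a) = μ • D a) (z : ℂ) (a : E) :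
    D (z • a) = z • D a := by
  obtain ⟨n, hn⟩ := exists_nat_gt ‖z‖
  have hn0 : (0 : ℝ) < n := lt_of_le_of_lt (norm_nonneg z) hn
  have hnat : ∀ x, D ((n : ℂ) • x) = (n : ℂ) • D x := by
    intro x
    have := map_nsmul (AddMonoidHom.mk' D hadd) n x
    simpa [Nat.cast_smul_eq_nsmul] using this
  have hne : (n : ℂ) ≠ 0 := by
    have : (n : ℝ) ≠ 0 := hn0.ne'
    exact_mod_cast this
  obtain ⟨u, v, hu1, hv1, huv⟩ := hur_unit_sum (z / n) (by
    rw [norm_div, Complex.norm_natCast, div_le_iff₀ hn0]; linarith)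
  have hz : z = n * (u + v) := by rw [← huv]; field_simp
  rw [hz, mul_smul, hnat, add_smul, hadd, hu u hu1, hu v hv1, mul_smul, add_smul]

lemma hur_rpow_pow {E : Type*} [NormedAddCommGroup E] [NormedSpace ℂ E] (p : ℝ) (n : ℕ) (a : E) :
    ‖(2 : ℂ) ^ n • a‖ ^ p = ((2 : ℝ) ^ p) ^ n * ‖a‖ ^ p := by
  rw [norm_smul, norm_pow, Complex.norm_two, Real.mul_rpow (by positivity) (norm_nonneg _),
    ← Real.rpow_natCast, ← Real.rpow_natCast, ← Real.rpow_mul (by norm_num),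
    ← Real.rpow_mul (by norm_num), mul_comm p]

lemma hur_two_rpow {p : ℝ} (hp1 : p < 1) : (2 : ℝ) ^ p < 2 := by
  have := Real.rpow_lt_rpow_of_exponent_lt (x := 2) (by norm_num) hp1
  simpa using this

lemma hur_scaled {E G : Type*} [NormedAddCommGroup E] [NormedSpace ℂ E]
    [NormedAddCommGroup G] [NormedSpace ℂ G] {p : ℝ} (hp1 : p < 1)
    (g : ℕ → G) (C : ℝ) (h : ∀ n, ‖g n‖ ≤ C * ((2 : ℝ) ^ p) ^ n) :
    Tendsto (fun n => ((2 : ℂ) ^ n)⁻¹ • g n) atTop (nhds 0) := by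
  have hq : Tendsto (fun n : ℕ => C * ((2 : ℝ) ^ p / 2) ^ n) atTop (nhds (C * 0)) :=
    (tendsto_pow_atTop_nhds_zero_of_lt_one (by positivity)
      (by rw [div_lt_one (by norm_num)]; exact hur_two_rpow hp1)).const_mul C
  rw [mul_zero] at hq
  refine squeeze_zero_norm (fun n => ?_) hq
  rw [norm_smul, norm_inv, norm_pow, Complex.norm_two, div_pow, inv_mul_le_iff₀ (by positivity)]
  refine (h n).trans (le_of_eq ?_)
  field_simp

lemma hur_hyers {E : Type*} [NormedAddCommGroup E] [NormedSpace ℂ E] [CompleteSpace E]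
    (p θ : ℝ) (hp0 : 0 < p) (hp1 : p < 1) (hθ : 0 ≤ θ) (f : E → E) (hf0 : f 0 = 0)
    (h : ∀ μ : ℂ, ‖μ‖ = 1 → ∀ a b : E,
      ‖(2 * μ) • f ((2 : ℂ)⁻¹ • (a + b)) + (2 * μ) • f ((2 : ℂ)⁻¹ • (a - b))
        - (2 : ℂ) • f (μ • a)‖ ≤ θ * (‖a‖ ^ p + ‖b‖ ^ p)) :
    ∃ D : E → E, (∀ a b, D (a + b) = D a + D b) ∧ (∀ (z : ℂ) a, D (z • a) = z • D a) ∧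
      (∀ a, Tendsto (fun n : ℕ => ((2 : ℂ) ^ n)⁻¹ • f ((2 : ℂ) ^ n • a)) atTop (nhds (D a))) ∧
      ∀ a, ‖f a - D a‖ ≤ 2 ^ p * θ / (2 - 2 ^ p) * ‖a‖ ^ p := by
  have hq2 := hur_two_rpow hp1
  have hqp : (0 : ℝ) < 2 ^ p := by positivity
  have hq1 : (2 : ℝ) ^ p / 2 < 1 := by rw [div_lt_one (by norm_num)]; exact hq2
  have hz : (0 : ℝ) ^ p = 0 := Real.zero_rpow hp0.ne'
  have hstep : ∀ a, ‖(4 : ℂ) • f a - (2 : ℂ) • f ((2 : ℂ) • a)‖ ≤ θ * (2 ^ p * ‖a‖ ^ p) := by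
    intro a
    have h1 := h 1 (by simp) ((2 : ℂ) • a) 0
    have h2 := hur_rpow_pow p 1 a
    simp only [pow_one] at h2
    rw [norm_zero, hz, h2, add_zero, sub_zero, add_zero, one_smul, smul_smul, mul_one,
      inv_mul_cancel₀ two_ne_zero, one_smul, ← add_smul] at h1
    norm_num at h1
    exact h1
  let F : E → ℕ → E := fun a n => ((2 : ℂ) ^ n)⁻¹ • f ((2 : ℂ) ^ n • a)
  have hdist : ∀ a n, dist (F a n) (F a (n + 1)) ≤
      (θ * 2 ^ p * ‖a‖ ^ p / 4) * ((2 : ℝ) ^ p / 2) ^ n := by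
    intro a n
    have h1 := hstep ((2 : ℂ) ^ n • a)
    rw [hur_rpow_pow, smul_smul, ← pow_succ'] at h1
    have h2 : F a n - F a (n + 1) = ((4 : ℂ) * 2 ^ n)⁻¹ •
        ((4 : ℂ) • f ((2 : ℂ) ^ n • a) - (2 : ℂ) • f ((2 : ℂ) ^ (n + 1) • a)) := by
      simp only [F]
      rw [smul_sub, smul_smul, smul_smul]
      congr 2
      · field_simp
      · rw [pow_succ]; field_simp; norm_num
    rw [dist_eq_norm, h2, norm_smul, norm_inv, norm_mul, norm_pow, Complex.norm_two,
      inv_mul_le_iff₀ (by simp)]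
    refine h1.trans (le_of_eq ?_)
    rw [div_pow]
    norm_num
    field_simp
  have hcau : ∀ a, CauchySeq (F a) := fun a => cauchySeq_of_le_geometric _ _ hq1 (hdist a)
  choose D hD using fun a => cauchySeq_tendsto_of_complete (hcau a)
  have hlim : ∀ μ : ℂ, ‖μ‖ = 1 → ∀ a b : E,
      (2 * μ) • D ((2 : ℂ)⁻¹ • (a + b)) + (2 * μ) • D ((2 : ℂ)⁻¹ • (a - b))
        - (2 : ℂ) • D (μ • a) = 0 := by
    intro μ hμ a b
    have h1 := (((hD ((2 : ℂ)⁻¹ • (a + b))).const_smul (2 * μ)).add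
      ((hD ((2 : ℂ)⁻¹ • (a - b))).const_smul (2 * μ))).sub ((hD (μ • a)).const_smul (2 : ℂ))
    refine tendsto_nhds_unique h1 ?_
    have h2 := hur_scaled (E := E) hp1 (fun n : ℕ =>
      (2 * μ) • f ((2 : ℂ)⁻¹ • ((2 : ℂ) ^ n • a + (2 : ℂ) ^ n • b))
      + (2 * μ) • f ((2 : ℂ)⁻¹ • ((2 : ℂ) ^ n • a - (2 : ℂ) ^ n • b))
        - (2 : ℂ) • f (μ • (2 : ℂ) ^ n • a)) (θ * (‖a‖ ^ p + ‖b‖ ^ p)) (fun n => by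
          refine (h μ hμ _ _).trans (le_of_eq ?_)
          rw [hur_rpow_pow, hur_rpow_pow]; ring)
    refine h2.congr fun n => ?_
    simp only [F]
    rw [← smul_add ((2 : ℂ) ^ n), ← smul_sub ((2 : ℂ) ^ n),
      smul_comm (2 : ℂ)⁻¹ ((2 : ℂ) ^ n), smul_comm (2 : ℂ)⁻¹ ((2 : ℂ) ^ n),
      smul_comm μ ((2 : ℂ) ^ n)]
    module
  have hD0 : D 0 = 0 := by
    refine tendsto_nhds_unique (hD 0) ?_
    simp [F, hf0]
  have hhalf : ∀ a, (2 : ℂ) • D ((2 : ℂ)⁻¹ • a) = D a := by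
    intro a
    have h1 := hlim 1 (by simp) a 0
    rw [add_zero, sub_zero, one_smul, mul_one, ← smul_add, ← smul_sub] at h1
    have h2 := (smul_eq_zero.1 h1).resolve_left two_ne_zero
    rw [two_smul]
    exact sub_eq_zero.1 h2
  have hadd : ∀ a b, D (a + b) = D a + D b := by
    intro x y
    have h1 := hlim 1 (by simp) (x + y) (x - y)
    rw [one_smul, mul_one, show (2 : ℂ)⁻¹ • (x + y + (x - y)) = x by module,
      show (2 : ℂ)⁻¹ • (x + y - (x - y)) = y by module, ← smul_add, ← smul_sub] at h1
    exact (sub_eq_zero.1 ((smul_eq_zero.1 h1).resolve_left two_ne_zero)).symm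
  have hu : ∀ μ : ℂ, ‖μ‖ = 1 → ∀ a, D (μ • a) = μ • D a := by
    intro μ hμ a
    have h1 := hlim μ hμ a 0
    rw [add_zero, sub_zero, mul_comm, mul_smul, hhalf, ← two_smul ℂ, ← smul_sub] at h1
    exact (sub_eq_zero.1 ((smul_eq_zero.1 h1).resolve_left two_ne_zero)).symm
  refine ⟨D, hadd, hur_homog D hadd hu, hD, fun a => ?_⟩
  have h1 := dist_le_of_le_geometric_of_tendsto₀ _ _ hq1 (hdist a) (hD a)
  have h2 : F a 0 = f a := by simp [F]
  rw [h2, dist_eq_norm] at h1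
  refine h1.trans ?_
  have h3 : θ * 2 ^ p * ‖a‖ ^ p / 4 / (1 - 2 ^ p / 2) =
      (2 ^ p * θ / (2 - 2 ^ p) * ‖a‖ ^ p) / 2 := by
    have : (2 : ℝ) - 2 ^ p ≠ 0 := by linarith
    have h' : (1 : ℝ) - 2 ^ p / 2 ≠ 0 := by linarith
    rw [show (1 : ℝ) - 2 ^ p / 2 = (2 - 2 ^ p) / 2 by ring]
    field_simp
    norm_num
  rw [h3]
  have h4 : 0 ≤ 2 ^ p * θ / (2 - 2 ^ p) * ‖a‖ ^ p := by
    have : (0 : ℝ) < 2 - 2 ^ p := by linarith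
    positivity
  linarith

lemma hur_unique {E : Type*} [NormedAddCommGroup E] [NormedSpace ℂ E] (p C : ℝ) (hp1 : p < 1)
    (f D D' : E → E) (hsmul : ∀ (z : ℂ) a, D (z • a) = z • D a)
    (hsmul' : ∀ (z : ℂ) a, D' (z • a) = z • D' a)
    (hbd : ∀ a, ‖f a - D a‖ ≤ C * ‖a‖ ^ p) (hbd' : ∀ a, ‖f a - D' a‖ ≤ C * ‖a‖ ^ p) :
    D' = D := by
  funext a
  have h2 := hur_scaled (E := E) hp1 (fun n : ℕ => D' ((2 : ℂ) ^ n • a) - D ((2 : ℂ) ^ n • a))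
    (2 * C * ‖a‖ ^ p) (fun n => by
      have h3 := hbd ((2 : ℂ) ^ n • a)
      have h4 := hbd' ((2 : ℂ) ^ n • a)
      rw [hur_rpow_pow] at h3 h4
      have h5 := norm_sub_le (f ((2 : ℂ) ^ n • a) - D ((2 : ℂ) ^ n • a))
        (f ((2 : ℂ) ^ n • a) - D' ((2 : ℂ) ^ n • a))
      rw [sub_sub_sub_cancel_left] at h5
      linarith)
  refine sub_eq_zero.1 (tendsto_nhds_unique (tendsto_const_nhds.congr fun n => ?_) h2)
  have hne : (2 : ℂ) ^ n ≠ 0 := pow_ne_zero _ two_ne_zero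
  rw [hsmul, hsmul', ← smul_sub, smul_smul, inv_mul_cancel₀ hne, one_smul]

/-- Corollary 2.3 (Hyers–Ulam–Rassias stability of `J*`-derivations, power control,
`r = 2`): there is a unique `J*`-derivation `D` with
`‖f(a) − D(a)‖ ≤ 2^p θ/(2 − 2^p) ‖a‖^p`. -/
theorem HUR_stability_JStarDerivation
    (𝒜 : Submodule ℂ (H →L[ℂ] K)) (hclosed : IsClosed (𝒜 : Set (H →L[ℂ] K)))
    (hA : JStarClosed 𝒜)
    (p θ : ℝ) (hp0 : 0 < p) (hp1 : p < 1) (hθ : 0 ≤ θ)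
    (f : 𝒜 → 𝒜)
    (hineq : ∀ (μ : ℂ), ‖μ‖ = 1 → ∀ a b c : 𝒜,
      ‖jensenDefect 𝒜 hA 2 f μ a b c‖ ≤ θ * (‖a‖ ^ p + ‖b‖ ^ p + ‖c‖ ^ p)) :
    ∃! D : 𝒜 → 𝒜,
      IsJStarDerivation 𝒜 hA D ∧
      ∀ a : 𝒜, ‖f a - D a‖ ≤ 2 ^ p * θ / (2 - 2 ^ p) * ‖a‖ ^ p := by

  have hn0 : ‖(0 : 𝒜)‖ = 0 := norm_zero
  have hrp : ∀ (n : ℕ) (a : 𝒜), ‖(2 : ℂ) ^ n • a‖ ^ p = ((2 : ℝ) ^ p) ^ n * ‖a‖ ^ p :=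
    fun n a => hur_rpow_pow p n a
  have hz : (0 : ℝ) ^ p = 0 := Real.zero_rpow hp0.ne'
  have hcube0 : cube 𝒜 hA 0 = 0 := by
    ext1; simp [cube]
  have : CompleteSpace 𝒜 := hclosed.completeSpace_coe
  have hf0 : f 0 = 0 := by
    have h1 := hineq 1 (by simp) 0 0 0
    simp only [hn0, hz, add_zero, mul_zero, norm_le_zero_iff, jensenDefect, hcube0,
      sub_zero, smul_zero, ZeroMemClass.coe_zero, ContinuousLinearMap.comp_zero,
      ContinuousLinearMap.zero_comp, map_zero] at h1
    have h2 : (3 : ℂ) • (f 0 : H →L[ℂ] K) = 0 := by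
      rw [← h1]; push_cast; module
    ext1
    exact (smul_eq_zero.1 h2).resolve_left (by norm_num)
  obtain ⟨D, hadd, hsmul, hD, hbd⟩ := hur_hyers p θ hp0 hp1 hθ f hf0 (by
    intro μ hμ a b
    have h1 := hineq μ hμ a b 0
    rw [hn0, hz, add_zero] at h1
    refine le_trans (le_of_eq ?_) h1
    change ‖(((2 * μ) • f ((2 : ℂ)⁻¹ • (a + b)) + (2 * μ) • f ((2 : ℂ)⁻¹ • (a - b))
        - (2 : ℂ) • f (μ • a) : 𝒜) : H →L[ℂ] K)‖ = _
    congr 1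
    simp [jensenDefect, hcube0, hf0])
  have hder : ∀ c : 𝒜, (D (cube 𝒜 hA c) : H →L[ℂ] K) =
      ((D c : H →L[ℂ] K) ∘L adjoint (c : H →L[ℂ] K)) ∘L (c : H →L[ℂ] K) +
      ((c : H →L[ℂ] K) ∘L adjoint (D c : H →L[ℂ] K)) ∘L (c : H →L[ℂ] K) +
      ((c : H →L[ℂ] K) ∘L adjoint (c : H →L[ℂ] K)) ∘L (D c : H →L[ℂ] K) := by
    intro c
    have hc := (continuous_subtype_val.tendsto _).comp (hD c)
    have hcu := ((continuous_subtype_val.tendsto _).comp (hD (cube 𝒜 hA c))).comp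
      (tendsto_id.const_mul_atTop' (show 0 < 3 by norm_num))
    have c1 : Continuous fun x : H →L[ℂ] K =>
        (x ∘L adjoint (c : H →L[ℂ] K)) ∘L (c : H →L[ℂ] K) +
        ((c : H →L[ℂ] K) ∘L adjoint x) ∘L (c : H →L[ℂ] K) +
        ((c : H →L[ℂ] K) ∘L adjoint (c : H →L[ℂ] K)) ∘L x := by
      have : Continuous fun x : H →L[ℂ] K => adjoint x := (adjoint (𝕜 := ℂ)).continuous
      fun_prop
    have h1 := hcu.sub ((c1.tendsto _).comp hc)
    refine sub_eq_zero.1 (tendsto_nhds_unique h1 ?_)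
    have h2 := hur_scaled (E := 𝒜) hp1 (fun n : ℕ => ((4 : ℂ) ^ n)⁻¹ •
      jensenDefect 𝒜 hA 2 f 1 0 0 ((2 : ℂ) ^ n • c)) (θ * ‖c‖ ^ p) (fun n => by
        have h3 := hineq 1 (by simp) 0 0 ((2 : ℂ) ^ n • c)
        rw [hn0, hz, zero_add, zero_add, hrp] at h3
        rw [norm_smul]
        have h4 : ‖((4 : ℂ) ^ n)⁻¹‖ ≤ 1 := by
          rw [norm_inv, norm_pow]
          apply inv_le_one_of_one_le₀
          apply one_le_pow₀
          norm_num
        calc _ ≤ 1 * ‖jensenDefect 𝒜 hA 2 f 1 0 0 ((2 : ℂ) ^ n • c)‖ := by gcongr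
          _ ≤ _ := by rw [one_mul]; refine h3.trans (le_of_eq (by ring)))
    refine h2.congr fun n => ?_
    have hcc : cube 𝒜 hA ((2 : ℂ) ^ n • c) = (2 : ℂ) ^ (3 * n) • cube 𝒜 hA c := by
      ext1
      simp only [cube, Submodule.coe_smul, map_smulₛₗ, ContinuousLinearMap.smul_comp,
        ContinuousLinearMap.comp_smul, smul_smul]
      congr 1
      rw [map_pow, Complex.conj_ofNat]
      ring
    simp only [jensenDefect, hcc, Function.comp, id, hf0, add_zero, sub_zero, smul_zero,
      Submodule.coe_smul, Submodule.coe_zero, map_smulₛₗ, ContinuousLinearMap.smul_comp,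
      ContinuousLinearMap.comp_smul, zero_add, zero_sub]
    have e8 : (2 : ℂ) ^ (3 * n) = 2 ^ n * 2 ^ n * 2 ^ n := by ring
    have e4 : (4 : ℂ) ^ n = 2 ^ n * 2 ^ n := by rw [← mul_pow]; norm_num
    have hne : (2 : ℂ) ^ n ≠ 0 := pow_ne_zero _ two_ne_zero
    simp only [e4, map_pow, map_inv₀, Complex.conj_ofNat]
    generalize f ((2 : ℂ) ^ (3 * n) • cube 𝒜 hA c) = X
    rw [e8]
    generalize (2 : ℂ) ^ n = t at *
    match_scalars <;> field_simp
  refine ⟨D, ⟨⟨hadd, hsmul, hder⟩, hbd⟩, ?_⟩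
  rintro D' ⟨⟨_, hsmul', _⟩, hbd'⟩
  exact hur_unique p _ hp1 f D D' hsmul hsmul' hbd hbd'
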